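/- Let f and g be smooth real-valued functions on S¹ with zero mean. Then ∂₁g·Hg + (∂₁f)² + (1/2)Λ(g² − (Hg)²) − [Λ,g]g + [Λ,f]Λf = −Λ((Hg)²) + ∂₁([H,f]Λf) pointwise on S¹. -/

import Mathlib

open Complex Filter MeasureTheory

noncomputable section

instance : Fact (0 < 2 * Real.pi) := ⟨by positivity⟩

/-- Hilbert transform on the circle `S¹ = ℝ/2πℤ`: Fourier multiplier `-i·sgn k`. -/
def Hop (f : AddCircle (2 * Real.pi) → ℂ) : AddCircle (2 * Real.pi) → ℂ :=
  fun x => ∑' k : ℤ, (-Complex.I) * (k.sign : ℂ) * fourierCoeff f k * fourier k x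

/-- `Λⁿ`: Fourier multiplier `|k|ⁿ`. -/
def Lamn (n : ℕ) (f : AddCircle (2 * Real.pi) → ℂ) : AddCircle (2 * Real.pi) → ℂ :=
  fun x => ∑' k : ℤ, ((|k| : ℤ) : ℂ) ^ n * fourierCoeff f k * fourier k x

/-- `∂₁ⁿ`: Fourier multiplier `(ik)ⁿ` (spatial derivative of smooth periodic functions). -/
def Dn (n : ℕ) (f : AddCircle (2 * Real.pi) → ℂ) : AddCircle (2 * Real.pi) → ℂ :=
  fun x => ∑' k : ℤ, (Complex.I * (k : ℂ)) ^ n * fourierCoeff f k * fourier k x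

/-- A smooth (rapidly decaying Fourier coefficients) real-valued zero-mean function on `S¹`,
given by the sum of its Fourier series. -/
def IsNice (f : AddCircle (2 * Real.pi) → ℂ) : Prop :=
  (∀ n : ℕ, Summable fun k : ℤ => ((|k| : ℤ) : ℝ) ^ n * ‖fourierCoeff f k‖) ∧
  (∀ x, (f x).im = 0) ∧ fourierCoeff f 0 = 0 ∧
  (∀ x, f x = ∑' k : ℤ, fourierCoeff f k * fourier k x)

/-!
Let `D = Dn 1`, `H = Hop`, `Λ = Lamn 1`. Besides the Leibniz rule, only `D H = Λ`, `H Λ = -D` and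
the differentiated Cotlar identity `Λ (f g - Hf Hg) = D (Hf g + f Hg)` are needed. The first two
turn the Leibniz rule for `D (f HΛf)` into `D ([H, f] Λf) = [Λ, f] Λf + (Df)²`. Cotlar's identity
with both factors equal to `g` gives `½ Λ (g² - (Hg)²) = Dg Hg + g Λg`, which accounts for the
remaining terms.
-/

section Wiener

variable {T : ℝ}

lemma continuous_tsum_fourier {a : ℤ → ℂ} (ha : Summable a) :
    Continuous fun x : AddCircle T ↦ ∑' j, a j * fourier j x := by
  refine continuous_tsum (fun j ↦ by fun_prop) ha.norm fun j x ↦ ?_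
  rw [norm_mul, fourier_apply, Circle.norm_coe, mul_one]

variable [Fact (0 < T)] {f g : AddCircle T → ℂ} {m : ℤ → ℂ} {n r : ℕ}

lemma fourierCoeff_sub (hf : Integrable f AddCircle.haarAddCircle)
    (hg : Integrable g AddCircle.haarAddCircle) :
    fourierCoeff (f - g) = fourierCoeff f - fourierCoeff g := by
  have h := fourierCoeff.add (hf.sub hg) hg
  rw [sub_add_cancel] at h
  exact eq_sub_of_add_eq h.symm

lemma integral_fourier_neg_mul_mul_fourier (f : AddCircle T → ℂ) (c : ℂ) (j k : ℤ) :
    ∫ x, fourier (-k) x * (f x * (c * fourier j x)) ∂AddCircle.haarAddCircle =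
      c * fourierCoeff f (k - j) := by
  rw [fourierCoeff, ← integral_const_mul]
  refine integral_congr_ae (.of_forall fun x ↦ ?_)
  have hchar : (fourier (-(k - j)) x : ℂ) = fourier (-k) x * fourier j x := by
    rw [← fourier_add, neg_sub', sub_neg_eq_add]
  simp only [hchar, smul_eq_mul]
  ring

lemma hasSum_fourierCoeff_mul_tsum (hf : Integrable f AddCircle.haarAddCircle) {a : ℤ → ℂ}
    (ha : Summable a) (k : ℤ) :
    HasSum (fun j ↦ a j * fourierCoeff f (k - j))
      (fourierCoeff (fun x ↦ f x * ∑' j, a j * fourier j x) k) := by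
  have hint (j : ℤ) : Integrable (fun x ↦ fourier (-k) x * (f x * (a j * fourier j x)))
      AddCircle.haarAddCircle := by
    have h := ((hf.fourier_smul j).const_mul (a j)).fourier_smul (-k)
    refine h.congr (.of_forall fun x ↦ ?_)
    simp only [smul_eq_mul]
    ring
  have hnorm (j : ℤ) : ∫ x, ‖(fourier (-k) x : ℂ) * (f x * (a j * fourier j x))‖
      ∂AddCircle.haarAddCircle = (∫ x, ‖f x‖ ∂AddCircle.haarAddCircle) * ‖a j‖ := by
    simp only [norm_mul, fourier_apply, Circle.norm_coe, one_mul, mul_one, integral_mul_const]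
  have h := hasSum_integral_of_summable_integral_norm hint
    (by simpa only [hnorm] using ha.norm.mul_left _)
  simpa only [integral_fourier_neg_mul_mul_fourier, tsum_mul_left, fourierCoeff, smul_eq_mul]
    using h

lemma fourierCoeff_tsum {a : ℤ → ℂ} (ha : Summable a) :
    fourierCoeff (fun x : AddCircle T ↦ ∑' j, a j * fourier j x) = a := by
  funext k
  have h := hasSum_fourierCoeff_mul_tsum (T := T) (integrable_const 1) ha k
  have hone : fourierCoeff (fun _ : AddCircle T ↦ (1 : ℂ)) = Pi.single 0 1 :=
    (congrArg fourierCoeff (funext fun _ ↦ fourier_zero.symm)).trans (fourierCoeff_fourier 0)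
  simp only [hone, one_mul] at h
  refine h.unique ?_
  convert hasSum_ite_eq k (a k) using 2 with j
  rcases eq_or_ne j k with rfl | hjk
  · simp
  · simp [hjk, sub_ne_zero.mpr hjk.symm]

/-- The weighted Wiener algebra `Aⁿ` of the circle: continuous functions `f` with
`∑ (1 + |k|)ⁿ |f̂(k)| < ∞`. It serves as a scale of smoothness on which the Fourier series of every
function converges absolutely. -/
structure MemWiener (n : ℕ) (f : AddCircle T → ℂ) : Prop where
  continuous : Continuous f
  summable_weight : Summable fun k : ℤ ↦ (1 + |(k : ℝ)|) ^ n * ‖fourierCoeff f k‖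

/-- The Fourier multiplier with symbol `m`, with the junk value `0` at the points where its series
does not converge absolutely. -/
def fourierMultiplier (m : ℤ → ℂ) (f : AddCircle T → ℂ) : AddCircle T → ℂ :=
  fun x ↦ ∑' k : ℤ, m k * fourierCoeff f k * fourier k x

lemma one_add_abs_le_mul (j k : ℤ) :
    1 + |(k : ℝ)| ≤ (1 + |(j : ℝ)|) * (1 + |((k - j : ℤ) : ℝ)|) := by
  have htri := abs_add_le (j : ℝ) (k - j)
  rw [add_sub_cancel] at htri
  push_cast
  nlinarith [mul_nonneg (abs_nonneg (j : ℝ)) (abs_nonneg ((k : ℝ) - j))]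

namespace MemWiener

lemma integrable (hf : MemWiener n f) : Integrable f AddCircle.haarAddCircle :=
  hf.continuous.integrable_of_hasCompactSupport (.of_compactSpace f)

lemma mono (hf : MemWiener n f) (hrn : r ≤ n) : MemWiener r f where
  continuous := hf.continuous
  summable_weight := by
    refine hf.summable_weight.of_nonneg_of_le (fun k ↦ by positivity) fun k ↦ ?_
    gcongr
    linarith [abs_nonneg (k : ℝ)]

lemma summable_fourierCoeff (hf : MemWiener n f) : Summable (fourierCoeff f) :=
  .of_norm (by simpa using (hf.mono n.zero_le).summable_weight)

lemma hasSum (hf : MemWiener n f) (x : AddCircle T) :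
    HasSum (fun k ↦ fourierCoeff f k * fourier k x) (f x) :=
  has_pointwise_sum_fourier_series_of_summable (f := ⟨f, hf.continuous⟩) hf.summable_fourierCoeff x

lemma ext_fourierCoeff (hf : MemWiener n f) (hg : MemWiener r g)
    (h : ∀ k, fourierCoeff f k = fourierCoeff g k) : f = g := by
  funext x
  have hfx := hf.hasSum x
  simp only [h] at hfx
  exact hfx.unique (hg.hasSum x)

lemma add (hf : MemWiener n f) (hg : MemWiener n g) : MemWiener n (f + g) where
  continuous := hf.continuous.add hg.continuous
  summable_weight := by
    rw [fourierCoeff.add hf.integrable hg.integrable]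
    refine (hf.summable_weight.add hg.summable_weight).of_nonneg_of_le
      (fun k ↦ by positivity) fun k ↦ ?_
    rw [← mul_add, Pi.add_apply]
    gcongr
    exact norm_add_le _ _

lemma hasSum_fourierCoeff_mul (hf : MemWiener n f) (hg : MemWiener r g) (k : ℤ) :
    HasSum (fun j ↦ fourierCoeff f j * fourierCoeff g (k - j)) (fourierCoeff (f * g) k) := by
  have h := hasSum_fourierCoeff_mul_tsum hg.integrable hf.summable_fourierCoeff k
  simp only [(hf.hasSum _).tsum_eq] at h
  rwa [mul_comm f g]

lemma mul (hf : MemWiener n f) (hg : MemWiener n g) : MemWiener n (f * g) where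
  continuous := hf.continuous.mul hg.continuous
  summable_weight := by
    set F : ℤ → ℝ := fun k ↦ (1 + |(k : ℝ)|) ^ n * ‖fourierCoeff f k‖ with hF
    set G : ℤ → ℝ := fun k ↦ (1 + |(k : ℝ)|) ^ n * ‖fourierCoeff g k‖ with hG
    have hFG : Summable fun p : ℤ × ℤ ↦ F p.2 * G (p.1 - p.2) :=
      ((Equiv.prodShear (.refl ℤ) Equiv.subRight).summable_iff.mpr
        (hf.summable_weight.mul_of_nonneg hg.summable_weight
          (fun k ↦ by positivity) fun k ↦ by positivity)).prod_symm
    refine hFG.prod.of_nonneg_of_le (fun k ↦ by positivity) fun k ↦ ?_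
    have hterm (j : ℤ) : ‖(1 + |(k : ℝ)|) ^ n • (fourierCoeff f j * fourierCoeff g (k - j))‖ ≤
        F j * G (k - j) := by
      rw [norm_smul, Real.norm_of_nonneg (by positivity), norm_mul]
      calc (1 + |(k : ℝ)|) ^ n * (‖fourierCoeff f j‖ * ‖fourierCoeff g (k - j)‖)
          ≤ ((1 + |(j : ℝ)|) * (1 + |((k - j : ℤ) : ℝ)|)) ^ n *
              (‖fourierCoeff f j‖ * ‖fourierCoeff g (k - j)‖) := by
            gcongr
            exact one_add_abs_le_mul j k
        _ = F j * G (k - j) := by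
            rw [hF, hG, mul_pow]
            ring
    calc (1 + |(k : ℝ)|) ^ n * ‖fourierCoeff (f * g) k‖
        = ‖(1 + |(k : ℝ)|) ^ n • fourierCoeff (f * g) k‖ := by
          rw [norm_smul, Real.norm_of_nonneg (by positivity)]
      _ ≤ ∑' j, F j * G (k - j) :=
          ((hf.hasSum_fourierCoeff_mul hg k).const_smul _).norm_le_of_bounded
            (hFG.prod_factor k).hasSum hterm

lemma summable_symbol_mul {C : ℝ} (hf : MemWiener n f)
    (hm : ∀ k : ℤ, ‖m k‖ ≤ C * (1 + |(k : ℝ)|) ^ n) :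
    Summable fun k ↦ m k * fourierCoeff f k := by
  refine .of_norm_bounded (hf.summable_weight.mul_left C) fun k ↦ ?_
  rw [norm_mul, ← mul_assoc]
  gcongr
  exact hm k

end MemWiener

lemma fourierCoeff_fourierMultiplier (h : Summable fun k ↦ m k * fourierCoeff f k) (k : ℤ) :
    fourierCoeff (fourierMultiplier m f) k = m k * fourierCoeff f k :=
  congrFun (fourierCoeff_tsum h) k

lemma fourierMultiplier_congr {m' : ℤ → ℂ}
    (h : ∀ k, m k * fourierCoeff f k = m' k * fourierCoeff g k) :
    fourierMultiplier m f = fourierMultiplier m' g :=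
  funext fun x ↦ tsum_congr fun k ↦ congrArg (· * (fourier k x : ℂ)) (h k)

lemma MemWiener.fourierMultiplier_of_norm_symbol_le {C : ℝ} (hf : MemWiener (n + r) f)
    (hm : ∀ k : ℤ, ‖m k‖ ≤ C * (1 + |(k : ℝ)|) ^ r) : MemWiener n (fourierMultiplier m f) := by
  have hsum := (hf.mono (Nat.le_add_left r n)).summable_symbol_mul hm
  refine ⟨continuous_tsum_fourier hsum,
    (hf.summable_weight.mul_left C).of_nonneg_of_le (fun k ↦ by positivity) fun k ↦ ?_⟩
  calc (1 + |(k : ℝ)|) ^ n * ‖fourierCoeff (fourierMultiplier m f) k‖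
      = (1 + |(k : ℝ)|) ^ n * (‖m k‖ * ‖fourierCoeff f k‖) := by
        rw [fourierCoeff_fourierMultiplier hsum, norm_mul]
    _ ≤ (1 + |(k : ℝ)|) ^ n * (C * (1 + |(k : ℝ)|) ^ r * ‖fourierCoeff f k‖) := by
        gcongr
        exact hm k
    _ = C * ((1 + |(k : ℝ)|) ^ (n + r) * ‖fourierCoeff f k‖) := by ring

lemma hasSum_fourierMultiplier (h : Summable fun k ↦ m k * fourierCoeff f k) (x : AddCircle T) :
    HasSum (fun k ↦ m k * fourierCoeff f k * fourier k x) (fourierMultiplier m f x) :=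
  (Summable.of_norm
    (by simpa only [norm_mul, fourier_apply, Circle.norm_coe, mul_one] using h.norm)).hasSum

lemma fourierMultiplier_add (hf : Integrable f AddCircle.haarAddCircle)
    (hg : Integrable g AddCircle.haarAddCircle) (hmf : Summable fun k ↦ m k * fourierCoeff f k)
    (hmg : Summable fun k ↦ m k * fourierCoeff g k) :
    fourierMultiplier m (f + g) = fourierMultiplier m f + fourierMultiplier m g := by
  funext x
  refine Eq.trans (tsum_congr fun k ↦ ?_)
    ((hasSum_fourierMultiplier hmf x).add (hasSum_fourierMultiplier hmg x)).tsum_eq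
  rw [fourierCoeff.add hf hg, Pi.add_apply]
  ring

lemma fourierMultiplier_sub (hf : Integrable f AddCircle.haarAddCircle)
    (hg : Integrable g AddCircle.haarAddCircle) (hmf : Summable fun k ↦ m k * fourierCoeff f k)
    (hmg : Summable fun k ↦ m k * fourierCoeff g k) :
    fourierMultiplier m (f - g) = fourierMultiplier m f - fourierMultiplier m g := by
  funext x
  refine Eq.trans (tsum_congr fun k ↦ ?_)
    ((hasSum_fourierMultiplier hmf x).sub (hasSum_fourierMultiplier hmg x)).tsum_eq
  rw [fourierCoeff_sub hf hg, Pi.sub_apply]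
  ring

end Wiener

section Operators

variable {f g : AddCircle (2 * Real.pi) → ℂ} {n r : ℕ}

lemma norm_hopSymbol_le (k : ℤ) : ‖-Complex.I * (k.sign : ℂ)‖ ≤ 1 * (1 + |(k : ℝ)|) ^ 0 := by
  rcases lt_trichotomy k 0 with hk | rfl | hk
  · simp [Int.sign_eq_neg_one_of_neg hk]
  · simp
  · simp [Int.sign_eq_one_of_pos hk]

lemma norm_lamnSymbol_le (n : ℕ) (k : ℤ) :
    ‖((|k| : ℤ) : ℂ) ^ n‖ ≤ 1 * (1 + |(k : ℝ)|) ^ n := by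
  rw [norm_pow, Complex.norm_intCast, one_mul, Int.cast_abs, abs_abs]
  gcongr
  linarith

lemma norm_dnSymbol_le (n : ℕ) (k : ℤ) :
    ‖(Complex.I * (k : ℂ)) ^ n‖ ≤ 1 * (1 + |(k : ℝ)|) ^ n := by
  rw [norm_pow, norm_mul, Complex.norm_I, Complex.norm_intCast, one_mul, one_mul]
  gcongr
  linarith

lemma MemWiener.hop (hf : MemWiener n f) : MemWiener n (Hop f) :=
  hf.fourierMultiplier_of_norm_symbol_le (r := 0) norm_hopSymbol_le

lemma MemWiener.lamn (hf : MemWiener (n + r) f) : MemWiener n (Lamn r f) :=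
  hf.fourierMultiplier_of_norm_symbol_le (norm_lamnSymbol_le r)

lemma MemWiener.dn (hf : MemWiener (n + r) f) : MemWiener n (Dn r f) :=
  hf.fourierMultiplier_of_norm_symbol_le (norm_dnSymbol_le r)

lemma fourierCoeff_hop (hf : MemWiener n f) (k : ℤ) :
    fourierCoeff (Hop f) k = -Complex.I * k.sign * fourierCoeff f k :=
  fourierCoeff_fourierMultiplier
    ((hf.mono n.zero_le).summable_symbol_mul norm_hopSymbol_le) k

lemma fourierCoeff_lamn (hf : MemWiener n f) (k : ℤ) :
    fourierCoeff (Lamn n f) k = ((|k| : ℤ) : ℂ) ^ n * fourierCoeff f k :=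
  fourierCoeff_fourierMultiplier (hf.summable_symbol_mul (norm_lamnSymbol_le n)) k

lemma fourierCoeff_dn (hf : MemWiener n f) (k : ℤ) :
    fourierCoeff (Dn n f) k = (Complex.I * k) ^ n * fourierCoeff f k :=
  fourierCoeff_fourierMultiplier (hf.summable_symbol_mul (norm_dnSymbol_le n)) k

lemma lamn_sub (hf : MemWiener n f) (hg : MemWiener n g) :
    Lamn n (f - g) = Lamn n f - Lamn n g :=
  fourierMultiplier_sub hf.integrable hg.integrable
    (hf.summable_symbol_mul (norm_lamnSymbol_le n)) (hg.summable_symbol_mul (norm_lamnSymbol_le n))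

lemma dn_add (hf : MemWiener n f) (hg : MemWiener n g) : Dn n (f + g) = Dn n f + Dn n g :=
  fourierMultiplier_add hf.integrable hg.integrable
    (hf.summable_symbol_mul (norm_dnSymbol_le n)) (hg.summable_symbol_mul (norm_dnSymbol_le n))

lemma dn_sub (hf : MemWiener n f) (hg : MemWiener n g) : Dn n (f - g) = Dn n f - Dn n g :=
  fourierMultiplier_sub hf.integrable hg.integrable
    (hf.summable_symbol_mul (norm_dnSymbol_le n)) (hg.summable_symbol_mul (norm_dnSymbol_le n))

lemma dn_one_hop (hf : MemWiener n f) : Dn 1 (Hop f) = Lamn 1 f := by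
  refine fourierMultiplier_congr fun k ↦ ?_
  have hsign : ((k.sign : ℤ) : ℂ) * k = ((|k| : ℤ) : ℂ) := mod_cast Int.sign_mul_self_eq_abs k
  rw [fourierCoeff_hop hf, ← hsign]
  linear_combination -(k * k.sign * fourierCoeff f k) * Complex.I_mul_I

lemma hop_lamn_one (hf : MemWiener 1 f) : Hop (Lamn 1 f) = -Dn 1 f := by
  funext x
  rw [Pi.neg_apply, Hop, Dn, ← tsum_neg]
  refine tsum_congr fun k ↦ ?_
  have hsign : ((k.sign : ℤ) : ℂ) * ((|k| : ℤ) : ℂ) = k := mod_cast Int.sign_mul_abs k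
  rw [fourierCoeff_lamn hf]
  linear_combination -(Complex.I * fourierCoeff f k * fourier k x) * hsign

lemma dn_one_mul (hf : MemWiener 1 f) (hg : MemWiener 1 g) :
    Dn 1 (f * g) = Dn 1 f * g + f * Dn 1 g := by
  have hf₀ := hf.mono zero_le_one
  have hg₀ := hg.mono zero_le_one
  have hDf : MemWiener 0 (Dn 1 f) := hf.dn
  have hDg : MemWiener 0 (Dn 1 g) := hg.dn
  have hD : MemWiener 0 (Dn 1 (f * g)) := (hf.mul hg).dn
  refine hD.ext_fourierCoeff ((hDf.mul hg₀).add (hf₀.mul hDg)) fun k ↦ ?_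
  rw [fourierCoeff_dn (hf.mul hg),
    fourierCoeff.add (hDf.mul hg₀).integrable (hf₀.mul hDg).integrable]
  refine ((hf.hasSum_fourierCoeff_mul hg k).mul_left _).unique ?_
  refine ((hDf.hasSum_fourierCoeff_mul hg k).add
    (hf.hasSum_fourierCoeff_mul hDg k)).congr_fun fun j ↦ ?_
  rw [fourierCoeff_dn hf, fourierCoeff_dn hg]
  push_cast
  ring

lemma abs_add_mul_one_add_sign_mul_sign (j k : ℤ) :
    |j + k| * (1 + j.sign * k.sign) = (j + k) * (j.sign + k.sign) := by
  rcases lt_trichotomy j 0 with hj | rfl | hj <;> rcases lt_trichotomy k 0 with hk | rfl | hk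
  · rw [Int.sign_eq_neg_one_of_neg hj, Int.sign_eq_neg_one_of_neg hk, abs_of_neg (by omega)]
    ring
  · simp [Int.mul_sign_self]
  · simp [Int.sign_eq_neg_one_of_neg hj, Int.sign_eq_one_of_pos hk]
  · simp [Int.mul_sign_self]
  · simp
  · simp [Int.mul_sign_self]
  · simp [Int.sign_eq_one_of_pos hj, Int.sign_eq_neg_one_of_neg hk]
  · simp [Int.mul_sign_self]
  · rw [Int.sign_eq_one_of_pos hj, Int.sign_eq_one_of_pos hk, abs_of_pos (by omega)]
    ring

/-- The **Cotlar identity**, differentiated so that it also holds for functions of nonzero mean. -/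
theorem lamn_one_mul_sub_hop_mul_hop (hf : MemWiener n f) (hg : MemWiener r g) :
    Lamn 1 (f * g - Hop f * Hop g) = Dn 1 (Hop f * g + f * Hop g) := by
  have hf₀ := hf.mono n.zero_le
  have hg₀ := hg.mono r.zero_le
  refine fourierMultiplier_congr fun k ↦ ?_
  rw [fourierCoeff_sub (hf₀.mul hg₀).integrable (hf₀.hop.mul hg₀.hop).integrable,
    fourierCoeff.add (hf₀.hop.mul hg₀).integrable (hf₀.mul hg₀.hop).integrable]
  refine (((hf.hasSum_fourierCoeff_mul hg k).sub
    (hf.hop.hasSum_fourierCoeff_mul hg.hop k)).mul_left _).unique ?_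
  refine (((hf.hop.hasSum_fourierCoeff_mul hg k).add
    (hf.hasSum_fourierCoeff_mul hg.hop k)).mul_left _).congr_fun fun j ↦ ?_
  have hsign : ((|k| : ℤ) : ℂ) * (1 + j.sign * (k - j).sign) = k * (j.sign + (k - j).sign) := by
    have h := abs_add_mul_one_add_sign_mul_sign j (k - j)
    rw [add_sub_cancel] at h
    exact_mod_cast h
  simp only [fourierCoeff_hop hf, fourierCoeff_hop hg, pow_one]
  linear_combination fourierCoeff f j * fourierCoeff g (k - j) * hsign
    + (k * (j.sign + (k - j).sign) - ((|k| : ℤ) : ℂ) * (j.sign * (k - j).sign))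
      * (fourierCoeff f j * fourierCoeff g (k - j)) * Complex.I_mul_I

lemma lamn_one_mul_self_sub_hop_mul_hop (hg : MemWiener 1 g) :
    Lamn 1 (g * g - Hop g * Hop g) = 2 * (Dn 1 g * Hop g + g * Lamn 1 g) := by
  rw [lamn_one_mul_sub_hop_mul_hop hg hg, dn_add (hg.hop.mul hg) (hg.mul hg.hop),
    dn_one_mul hg.hop hg, dn_one_mul hg hg.hop, dn_one_hop hg]
  ring

lemma dn_one_hop_mul_lamn_one_sub (hf : MemWiener 2 f) :
    Dn 1 (Hop (f * Lamn 1 f) - f * Hop (Lamn 1 f)) =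
      Lamn 1 (f * Lamn 1 f) - f * Lamn 1 (Lamn 1 f) + Dn 1 f ^ 2 := by
  have hf₁ : MemWiener 1 f := hf.mono one_le_two
  have hΛf : MemWiener 1 (Lamn 1 f) := hf.lamn
  rw [dn_sub (hf₁.mul hΛf).hop (hf₁.mul hΛf.hop), dn_one_hop (hf₁.mul hΛf),
    dn_one_mul hf₁ hΛf.hop, dn_one_hop hΛf, hop_lamn_one hf₁]
  ring

theorem order_one_grouping_general (hf : MemWiener 2 f) (hg : MemWiener 1 g) :
    Dn 1 g * Hop g + Dn 1 f ^ 2 + (1 / 2 : ℂ) • Lamn 1 (g * g - Hop g * Hop g)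
        - (Lamn 1 (g * g) - g * Lamn 1 g)
        + (Lamn 1 (f * Lamn 1 f) - f * Lamn 1 (Lamn 1 f))
      = -Lamn 1 (Hop g * Hop g)
        + Dn 1 (Hop (f * Lamn 1 f) - f * Hop (Lamn 1 f)) := by
  have hcotlar := lamn_one_mul_self_sub_hop_mul_hop hg
  have hhalf : (1 / 2 : ℂ) • Lamn 1 (g * g - Hop g * Hop g) = Dn 1 g * Hop g + g * Lamn 1 g := by
    rw [hcotlar, two_mul (Dn 1 g * Hop g + g * Lamn 1 g)]
    module
  have hsub := lamn_sub (hg.mul hg) (hg.hop.mul hg.hop)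
  rw [dn_one_hop_mul_lamn_one_sub hf, hhalf]
  linear_combination hsub - hcotlar

lemma IsNice.memWiener (hf : IsNice f) (n : ℕ) : MemWiener n f := by
  obtain ⟨hdecay, -, -, hseries⟩ := hf
  have hsum : Summable (fourierCoeff f) := .of_norm (by simpa using hdecay 0)
  refine ⟨funext hseries ▸ continuous_tsum_fourier hsum, ?_⟩
  refine (((hdecay 0).add (hdecay n)).mul_left (2 ^ (n - 1))).of_nonneg_of_le
    (fun k ↦ by positivity) fun k ↦ ?_
  rw [← add_mul, ← mul_assoc, Int.cast_abs, pow_zero]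
  gcongr
  simpa using add_pow_le zero_le_one (abs_nonneg (k : ℝ)) n

end Operators

/-- Grouping of the `O(1)` nonlinear terms:
`∂₁g·Hg + (∂₁f)² + ½Λ(g² − (Hg)²) − [Λ,g]g + [Λ,f]Λf = −Λ((Hg)²) + ∂₁([H,f]Λf)`. -/
theorem order_one_grouping (f g : AddCircle (2 * Real.pi) → ℂ)
    (hf : IsNice f) (hg : IsNice g) :
    ∀ x, Dn 1 g x * Hop g x + (Dn 1 f x) ^ 2
        + (1 / 2) * Lamn 1 (fun y => g y * g y - Hop g y * Hop g y) x
        - (Lamn 1 (fun y => g y * g y) x - g x * Lamn 1 g x)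
        + (Lamn 1 (fun y => f y * Lamn 1 f y) x - f x * Lamn 1 (Lamn 1 f) x)
      = -Lamn 1 (fun y => Hop g y * Hop g y) x
        + Dn 1 (fun y => Hop (fun z => f z * Lamn 1 f z) y - f y * Hop (Lamn 1 f) y) x := by
  exact congrFun (order_one_grouping_general (hf.memWiener 2) (hg.memWiener 1))
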